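/- arXiv:2004.07395 — 6 statements merged into one kernel-verified Lean document; each statement's English description precedes it below -/
import Mathlib

section
/- Let η > 0 be the SNR and let 0 < g ≤ h ≤ H be channel gains, where H is the channel gain of the SIC user n to its serving base station, h is the channel gain of the non-SIC user m to the serving base station, and g is the channel gain of user m to the base station attaining its minimum OMA rate (so that γ_m = (1/2)log₂(1+gη)). Assume the SIC user's minimum rate requirement satisfies γ_n ≤ (1/2)log₂(1+Hη). Define α* = ((1+hη)/√(1+gη) − 1)/(hη). Then α* is an optimal solution of the power allocation problem: α* ∈ [0,1], log₂(1+α*Hη) ≥ γ_n, log₂((1+hη)/(1+α*hη)) ≥ (1/2)log₂(1+gη), and for every α ∈ [0,1] satisfying log₂(1+αHη) ≥ γ_n and log₂((1+hη)/(1+αhη)) ≥ (1/2)log₂(1+gη), it holds that log₂(1+αHη) + log₂((1+hη)/(1+αhη)) ≤ log₂(1+α*Hη) + log₂((1+hη)/(1+α*hη)). -/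
/-!
Giving the SIC user more power raises the sum rate, since `(1 + α b) / (1 + α a)` is nondecreasing
in `α` for received SNRs `a ≤ b`. The optimum is therefore the largest share that still leaves the
non-SIC user its required rate. What remains is that this share serves the SIC user: a user with
received SNR `b` needs the share `(√(1 + b) - 1) / b = 1 / (√(1 + b) + 1)` to reach its OMA rate,
which decreases in `b`, and for `b = a` it is the share left over when the non-SIC user
demands its own OMA rate `log₂ √(1 + a)`. Demanding less only leaves more.
-/

open Real Set

namespace NOMA

/-- The OMA rate of a user with received SNR `c` (channel gain times `η`), who has the resource
block for half of the time. -/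
noncomputable def omaRate (c : ℝ) : ℝ := 1 / 2 * logb 2 (1 + c)

/-- The rate of the SIC user with received SNR `b` and power share `α`: interference has been
cancelled. -/
noncomputable def sicRate (b α : ℝ) : ℝ := logb 2 (1 + α * b)

/-- The rate of the non-SIC user with received SNR `a` and power share `1 - α`. The argument of the
logarithm is the simplified form of `1 + SINR`, with `SINR = (1 - α) a / (α a + 1)`. -/
noncomputable def nonSICRate (a α : ℝ) : ℝ := logb 2 ((1 + a) / (1 + α * a))

/-- The aggregate rate of a non-SIC user with received SNR `a` and a SIC user with received SNR `b`
whose power share is `α`. -/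
noncomputable def sumRate (a b α : ℝ) : ℝ := sicRate b α + nonSICRate a α

/-- The least share at which a SIC user with received SNR `b` reaches its OMA rate. -/
noncomputable def minShare (b : ℝ) : ℝ := (√(1 + b) - 1) / b

/-- The largest share of the SIC user at which a non-SIC user with received SNR `a` reaches the rate
`log₂ s`. The demand is given on the linear scale, as `s = 1 + SINR`. -/
noncomputable def maxShare (a s : ℝ) : ℝ := ((1 + a) / s - 1) / a

variable {a b c s α : ℝ}

theorem omaRate_eq_logb_sqrt (hc : 0 < 1 + c) : omaRate c = logb 2 √(1 + c) := by
  rw [omaRate, sqrt_eq_rpow, logb_rpow_eq_mul_logb_of_pos hc]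

theorem omaRate_le_sicRate_iff (hb : 0 < b) (hα : 0 ≤ α) :
    omaRate b ≤ sicRate b α ↔ minShare b ≤ α := by
  rw [omaRate_eq_logb_sqrt (by positivity), sicRate,
    logb_le_logb one_lt_two (by positivity) (by positivity), minShare, div_le_iff₀ hb,
    sub_le_iff_le_add']

theorem logb_le_nonSICRate_iff (ha : 0 < a) (hs : 0 < s) (hα : 0 ≤ α) :
    logb 2 s ≤ nonSICRate a α ↔ α ≤ maxShare a s := by
  have hpos : 0 < 1 + α * a := by positivity
  rw [nonSICRate, logb_le_logb one_lt_two hs (by positivity), le_div_comm₀ hs hpos, maxShare,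
    le_div_iff₀ ha, le_sub_iff_add_le']

theorem maxShare_nonneg (ha : 0 < a) (hs : 0 < s) (hsa : s ≤ 1 + a) : 0 ≤ maxShare a s :=
  div_nonneg (sub_nonneg.2 ((one_le_div hs).2 hsa)) ha.le

theorem maxShare_le_one (ha : 0 < a) (hs : 1 ≤ s) : maxShare a s ≤ 1 := by
  rw [maxShare, div_le_one ha, sub_le_iff_le_add']
  exact div_le_self (by positivity) hs

theorem maxShare_antitoneOn (ha : 0 < a) : AntitoneOn (maxShare a) (Ioi 0) := by
  intro s (hs : 0 < s) t _ hst
  unfold maxShare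
  gcongr

theorem maxShare_sqrt_one_add (a : ℝ) : maxShare a √(1 + a) = minShare a := by
  rw [maxShare, div_sqrt, minShare]

theorem minShare_eq_inv (hb : 0 < b) : minShare b = (√(1 + b) + 1)⁻¹ := by
  have hsq : √(1 + b) ^ 2 = 1 + b := sq_sqrt (by positivity)
  rw [minShare, div_eq_iff hb.ne', inv_mul_eq_div, eq_div_iff (by positivity)]
  linear_combination hsq

theorem minShare_antitoneOn : AntitoneOn minShare (Ioi 0) := by
  intro a (ha : 0 < a) b (hb : 0 < b) hab
  rw [minShare_eq_inv ha, minShare_eq_inv hb]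
  gcongr

theorem minShare_le_maxShare (ha : 0 < a) (hab : a ≤ b) (hs : 0 < s) (hsa : s ≤ √(1 + a)) :
    minShare b ≤ maxShare a s :=
  calc
    minShare b ≤ minShare a := minShare_antitoneOn ha (ha.trans_le hab) hab
    _ = maxShare a √(1 + a) := (maxShare_sqrt_one_add a).symm
    _ ≤ maxShare a s := maxShare_antitoneOn ha hs (hs.trans_le hsa) hsa

theorem monotoneOn_one_add_mul_div_one_add_mul (ha : 0 ≤ a) (hab : a ≤ b) :
    MonotoneOn (fun α : ℝ ↦ (1 + α * b) / (1 + α * a)) (Ici 0) := by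
  intro α (hα : 0 ≤ α) β (hβ : 0 ≤ β) hαβ
  have hcross : 0 ≤ (β - α) * (b - a) := mul_nonneg (sub_nonneg.2 hαβ) (sub_nonneg.2 hab)
  refine (div_le_div_iff₀ (by positivity) (by positivity)).2 ?_
  linear_combination hcross

theorem sumRate_eq_logb_add_logb (ha : 0 ≤ a) (hb : 0 ≤ b) (hα : 0 ≤ α) :
    sumRate a b α = logb 2 ((1 + α * b) / (1 + α * a)) + logb 2 (1 + a) := by
  rw [sumRate, sicRate, nonSICRate, logb_div (by positivity) (by positivity),
    logb_div (by positivity) (by positivity)]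
  ring

theorem sumRate_monotoneOn (ha : 0 ≤ a) (hab : a ≤ b) : MonotoneOn (sumRate a b) (Ici 0) := by
  intro α (hα : 0 ≤ α) β (hβ : 0 ≤ β) hαβ
  have hb : 0 ≤ b := ha.trans hab
  rw [sumRate_eq_logb_add_logb ha hb hα, sumRate_eq_logb_add_logb ha hb hβ]
  exact add_le_add_left (logb_le_logb_of_le one_lt_two (by positivity)
    (monotoneOn_one_add_mul_div_one_add_mul ha hab hα hβ hαβ)) _

theorem isMaxOn_sumRate_maxShare (ha : 0 < a) (hab : a ≤ b) (hs : 0 < s) :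
    IsMaxOn (sumRate a b) {α | 0 ≤ α ∧ logb 2 s ≤ nonSICRate a α} (maxShare a s) := by
  rintro α ⟨hα, hrate⟩
  have hle : α ≤ maxShare a s := (logb_le_nonSICRate_iff ha hs hα).1 hrate
  exact sumRate_monotoneOn ha.le hab hα (hα.trans hle) hle

end NOMA

open NOMA

/-- Theorem 1 (optimal NOMA power allocation): with SNR `η > 0` and channel gains
`0 < g ≤ h ≤ H`, the coefficient `α* = ((1+hη)/√(1+gη) − 1)/(hη)` is feasible
(lies in `[0,1]`, meets the SIC user's minimum rate requirement `γn` and the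
non-SIC user's minimum OMA rate requirement `(1/2)log₂(1+gη)`) and maximizes
the aggregate pair rate among all feasible coefficients. -/
theorem optimal_power_allocation
    (η g h H γn : ℝ) (hη : 0 < η) (hg : 0 < g) (hgh : g ≤ h) (hhH : h ≤ H)
    (hγn : γn ≤ (1 / 2) * Real.logb 2 (1 + H * η))
    (αstar : ℝ)
    (hαstar : αstar = ((1 + h * η) / Real.sqrt (1 + g * η) - 1) / (h * η)) :
    0 ≤ αstar ∧ αstar ≤ 1 ∧
    Real.logb 2 (1 + αstar * H * η) ≥ γn ∧
    Real.logb 2 ((1 + h * η) / (1 + αstar * h * η)) ≥ (1 / 2) * Real.logb 2 (1 + g * η) ∧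
    ∀ α : ℝ, 0 ≤ α → α ≤ 1 →
      Real.logb 2 (1 + α * H * η) ≥ γn →
      Real.logb 2 ((1 + h * η) / (1 + α * h * η)) ≥ (1 / 2) * Real.logb 2 (1 + g * η) →
      Real.logb 2 (1 + α * H * η) + Real.logb 2 ((1 + h * η) / (1 + α * h * η)) ≤
        Real.logb 2 (1 + αstar * H * η) +
          Real.logb 2 ((1 + h * η) / (1 + αstar * h * η)) := by
  have ha : 0 < h * η := mul_pos (hg.trans_le hgh) hη
  have hc : 0 < g * η := mul_pos hg hη
  have hca : g * η ≤ h * η := by gcongr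
  have hab : h * η ≤ H * η := by gcongr
  have hs_one : 1 ≤ √(1 + g * η) := one_le_sqrt.2 (by linarith)
  have hs : 0 < √(1 + g * η) := by positivity
  have hsa : √(1 + g * η) ≤ √(1 + h * η) := by gcongr
  have hsa' : √(1 + g * η) ≤ 1 + h * η := hsa.trans (sqrt_le_self_iff.2 (.inr (by linarith)))
  have homa : 1 / 2 * logb 2 (1 + g * η) = logb 2 √(1 + g * η) :=
    omaRate_eq_logb_sqrt (by positivity)
  have hα₀ : 0 ≤ maxShare (h * η) √(1 + g * η) := maxShare_nonneg ha hs hsa'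
  subst hαstar
  simp only [mul_assoc _ h η, mul_assoc _ H η, homa]
  refine ⟨hα₀, maxShare_le_one ha hs_one, ?_, (logb_le_nonSICRate_iff ha hs hα₀).2 le_rfl,
    fun α hα _ _ hrate ↦ isMaxOn_sumRate_maxShare ha hab hs ⟨hα, hrate⟩⟩
  exact hγn.trans <| (omaRate_le_sicRate_iff (ha.trans_le hab) hα₀).2 <|
    minShare_le_maxShare ha hab hs hsa
end

section
/- Let η > 0 and let 0 ≤ h ≤ H be real numbers. Then the function f(α) = log₂(1+αHη) + log₂((1+hη)/(1+αhη)) is monotone nondecreasing in α on the interval [0,1]. Moreover, if h < H then f is strictly increasing on [0,1]. -/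
/-! Since `log₂ ((1 + hη) / (1 + αhη)) = log₂ (1 + hη) - log₂ (1 + αhη)`, the aggregate rate is,
up to a constant, the logarithm of the linear fractional function `(1 + αHη) / (1 + αhη)` of `α`,
whose determinant `Hη - hη` has the sign of `H - h`. -/

open Set

section LinearFractional

variable {K : Type*} [Field K] {a b c d : K}

theorem linearFractional_sub_linearFractional {s t : K} (hs : c + s * d ≠ 0)
    (ht : c + t * d ≠ 0) :
    (a + t * b) / (c + t * d) - (a + s * b) / (c + s * d) =
      (b * c - a * d) * (t - s) / ((c + t * d) * (c + s * d)) := by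
  rw [div_sub_div _ _ ht hs]
  ring

variable [LinearOrder K] [IsStrictOrderedRing K]

theorem monotoneOn_linearFractional (hdet : a * d ≤ b * c) :
    MonotoneOn (fun t ↦ (a + t * b) / (c + t * d)) {t | 0 < c + t * d} := by
  intro s (hs : 0 < c + s * d) t (ht : 0 < c + t * d) hst
  rw [← sub_nonneg, linearFractional_sub_linearFractional hs.ne' ht.ne']
  exact div_nonneg (mul_nonneg (sub_nonneg.2 hdet) (sub_nonneg.2 hst)) (mul_pos ht hs).le

theorem strictMonoOn_linearFractional (hdet : a * d < b * c) :
    StrictMonoOn (fun t ↦ (a + t * b) / (c + t * d)) {t | 0 < c + t * d} := by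
  intro s (hs : 0 < c + s * d) t (ht : 0 < c + t * d) hst
  rw [← sub_pos, linearFractional_sub_linearFractional hs.ne' ht.ne']
  exact div_pos (mul_pos (sub_pos.2 hdet) (sub_pos.2 hst)) (mul_pos ht hs)

end LinearFractional

/-- The aggregate data rate `R₁(α) + R₂(α)` of a SIC user with channel gain `H` and a non-SIC user
with channel gain `h` at SNR `η`, as a function of the power allocation coefficient `α`. The base
`B` of the logarithm is the unit of information (`B = 2` for bits). -/
noncomputable def aggregateRate (B η h H α : ℝ) : ℝ :=
  Real.logb B (1 + α * H * η) + Real.logb B ((1 + h * η) / (1 + α * h * η))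

/-- The coefficients `α` for which `1 + αHη` and `1 + αhη` are positive, so that, when
`1 + hη` is positive as well, no logarithm in `aggregateRate` takes a junk value. -/
def rateDomain (η h H : ℝ) : Set ℝ :=
  {α | 0 < 1 + α * H * η ∧ 0 < 1 + α * h * η}

section AggregateRate

variable {B η h H : ℝ}

theorem Ici_zero_subset_rateDomain (hη : 0 ≤ η) (hh : 0 ≤ h) (hH : 0 ≤ H) :
    Ici 0 ⊆ rateDomain η h H := by
  intro α (hα : 0 ≤ α)
  exact ⟨by positivity, by positivity⟩

theorem rateDomain_subset_setOf_pos : rateDomain η h H ⊆ {α | 0 < 1 + α * (h * η)} := by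
  rintro α ⟨-, hα⟩
  rwa [mul_assoc] at hα

theorem mapsTo_div_rateDomain :
    MapsTo (fun α ↦ (1 + α * (H * η)) / (1 + α * (h * η))) (rateDomain η h H) (Ioi 0) := by
  rintro α ⟨hH, hh⟩
  simpa only [mem_Ioi, mul_assoc] using div_pos hH hh

theorem eqOn_aggregateRate (h₀ : 1 + h * η ≠ 0) :
    EqOn (fun α ↦ Real.logb B (1 + h * η) +
        Real.logb B ((1 + α * (H * η)) / (1 + α * (h * η))))
      (aggregateRate B η h H) (rateDomain η h H) := by
  rintro α ⟨hH, hh⟩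
  simp only [aggregateRate, ← mul_assoc]
  rw [Real.logb_div hH.ne' hh.ne', Real.logb_div h₀ hh.ne']
  ring

theorem monotoneOn_aggregateRate (hB : 1 < B) (h₀ : 1 + h * η ≠ 0) (hle : h * η ≤ H * η) :
    MonotoneOn (aggregateRate B η h H) (rateDomain η h H) := by
  have hratio : MonotoneOn (fun α ↦ (1 + α * (H * η)) / (1 + α * (h * η))) (rateDomain η h H) :=
    (monotoneOn_linearFractional (by simpa using hle)).mono rateDomain_subset_setOf_pos
  have hlog := (Real.strictMonoOn_logb hB).monotoneOn.comp hratio mapsTo_div_rateDomain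
  exact (hlog.const_add _).congr (eqOn_aggregateRate h₀)

theorem strictMonoOn_aggregateRate (hB : 1 < B) (h₀ : 1 + h * η ≠ 0) (hlt : h * η < H * η) :
    StrictMonoOn (aggregateRate B η h H) (rateDomain η h H) := by
  have hratio : StrictMonoOn (fun α ↦ (1 + α * (H * η)) / (1 + α * (h * η))) (rateDomain η h H) :=
    (strictMonoOn_linearFractional (by simpa using hlt)).mono rateDomain_subset_setOf_pos
  have hlog := (Real.strictMonoOn_logb hB).comp hratio mapsTo_div_rateDomain
  exact (hlog.const_add _).congr (eqOn_aggregateRate h₀)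

theorem aggregate_rate_monotone_general (hB : 1 < B) (hη : 0 < η) (h₀ : 0 < 1 + h * η)
    (hhH : h ≤ H) :
    MonotoneOn (aggregateRate B η h H) (rateDomain η h H) ∧
      (h < H → StrictMonoOn (aggregateRate B η h H) (rateDomain η h H)) :=
  ⟨monotoneOn_aggregateRate hB h₀.ne' (mul_le_mul_of_nonneg_right hhH hη.le),
    fun hlt ↦ strictMonoOn_aggregateRate hB h₀.ne' (mul_lt_mul_of_pos_right hlt hη)⟩

end AggregateRate

/-- The aggregate pair rate `f(α) = log₂(1+αHη) + log₂((1+hη)/(1+αhη))` is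
monotone nondecreasing in `α` on `[0,1]` when `0 ≤ h ≤ H` and `η > 0`, and
strictly increasing when moreover `h < H`. -/
theorem aggregate_rate_monotone
    (η h H : ℝ) (hη : 0 < η) (hh : 0 ≤ h) (hhH : h ≤ H) :
    MonotoneOn
      (fun α : ℝ =>
        Real.logb 2 (1 + α * H * η) + Real.logb 2 ((1 + h * η) / (1 + α * h * η)))
      (Set.Icc 0 1) ∧
    (h < H →
      StrictMonoOn
        (fun α : ℝ =>
          Real.logb 2 (1 + α * H * η) + Real.logb 2 ((1 + h * η) / (1 + α * h * η)))
        (Set.Icc 0 1)) := by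
  have hsub : Icc 0 1 ⊆ rateDomain η h H :=
    Icc_subset_Ici_self.trans (Ici_zero_subset_rateDomain hη.le hh (hh.trans hhH))
  have hrate := aggregate_rate_monotone_general one_lt_two hη (by positivity) hhH
  exact ⟨hrate.1.mono hsub, fun hlt ↦ (hrate.2 hlt).mono hsub⟩
end

section
/- Let η > 0 and let 0 < g ≤ h be real numbers. Then the power allocation coefficient α* = ((1+hη)/√(1+gη) − 1)/(hη) satisfies 0 ≤ α* ≤ 1. -/
/-! The coefficient is determined by `1 + α* · hη = (1 + hη) / √(1 + gη)`, so `α*` lies in `[0, 1]`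
exactly when this quotient lies in `[1, 1 + hη]`, i.e. when `1 ≤ √(1 + gη) ≤ 1 + hη`. -/

section OrderedField

variable {K : Type*} [Field K] [LinearOrder K] [IsStrictOrderedRing K] {a s x : K}

theorem div_sub_one_div_nonneg_iff (hs : 0 < s) (hx : 0 < x) :
    0 ≤ (a / s - 1) / x ↔ s ≤ a := by
  rw [le_div_iff₀ hx, zero_mul, sub_nonneg, one_le_div₀ hs]

theorem one_add_div_sub_one_div_le_one_iff (hs : 0 < s) (hx : 0 < x) :
    ((1 + x) / s - 1) / x ≤ 1 ↔ 1 ≤ s := by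
  have hx' : 0 < 1 + x := add_pos one_pos hx
  rw [div_le_one₀ hx, sub_le_iff_le_add', div_le_iff₀ hs, le_mul_iff_one_le_right hx']

end OrderedField

/-- For SNR `η > 0` and channel gains `0 < g ≤ h`, the candidate optimal power
allocation coefficient `α* = ((1+hη)/√(1+gη) − 1)/(hη)` lies in `[0,1]`. -/
theorem alpha_star_mem_unit_interval
    (η g h : ℝ) (hη : 0 < η) (hg : 0 < g) (hgh : g ≤ h) :
    0 ≤ ((1 + h * η) / Real.sqrt (1 + g * η) - 1) / (h * η) ∧
    ((1 + h * η) / Real.sqrt (1 + g * η) - 1) / (h * η) ≤ 1 := by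
  have hhη : 0 < h * η := mul_pos (hg.trans_le hgh) hη
  have one_le : 1 ≤ 1 + g * η := le_add_of_nonneg_right (mul_pos hg hη).le
  have one_le_sqrt : 1 ≤ √(1 + g * η) := Real.one_le_sqrt.mpr one_le
  have sqrt_le : √(1 + g * η) ≤ 1 + h * η :=
    calc √(1 + g * η) ≤ 1 + g * η := Real.sqrt_le_self_iff.mpr (.inr one_le)
      _ ≤ 1 + h * η := by gcongr
  have sqrt_pos : 0 < √(1 + g * η) := one_pos.trans_le one_le_sqrt
  exact ⟨(div_sub_one_div_nonneg_iff sqrt_pos hhη).mpr sqrt_le,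
    (one_add_div_sub_one_div_le_one_iff sqrt_pos hhη).mpr one_le_sqrt⟩
end

section
/- Let η > 0 and let 0 < g ≤ h ≤ H be real numbers, and set α* = ((1+hη)/√(1+gη) − 1)/(hη). Then log₂(1 + α*Hη) ≥ (1/2)log₂(1+Hη). Consequently, the SIC user with channel gain H served with coefficient α* achieves at least its OMA rate, and hence meets any minimum rate requirement γ_n ≤ (1/2)log₂(1+Hη). -/
/-!
Put `x = gη ≤ y = hη ≤ z = Hη`. Since `x ≤ y`, the quotient `(1 + y) / √(1 + x)` is at least
`√(1 + y)`, so `α*` is at least the slope `(√(1 + y) - 1) / y` of the chord of `t ↦ √(1 + t)` over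
`[0, y]`. By concavity this slope is at least that of the chord over `[0, z]`, whence
`√(1 + z) ≤ 1 + α* z`; taking base-2 logarithms compares the two rates.
-/

/-- The power coefficient `α*` as a function of the received SNRs `x = gη` and `y = hη`, the only
combinations of `g`, `h` and `η` on which it depends. -/
noncomputable def alphaStar (x y : ℝ) : ℝ := ((1 + y) / √(1 + x) - 1) / y

theorem sqrt_le_div_sqrt {a b : ℝ} (ha : 0 < a) (hab : a ≤ b) : √b ≤ b / √a :=
  calc
    √b = b / √b := Real.div_sqrt.symm
    _ ≤ b / √a := by
      have hb : 0 ≤ b := ha.le.trans hab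
      gcongr

theorem antitoneOn_sqrt_one_add_sub_one_div :
    AntitoneOn (fun t : ℝ ↦ (√(1 + t) - 1) / t) (Set.Ici (-1) \ {0}) := by
  rintro y ⟨hy, hy0⟩ z ⟨hz, hz0⟩ hyz
  rw [Set.mem_Ici] at hy hz
  have slope_le : slope Real.sqrt 1 (1 + z) ≤ slope Real.sqrt 1 (1 + y) :=
    Real.strictConcaveOn_sqrt.concaveOn.slope_anti (Set.mem_Ici.2 zero_le_one)
      ⟨Set.mem_Ici.2 (by linarith), by simpa using hy0⟩
      ⟨Set.mem_Ici.2 (by linarith), by simpa using hz0⟩ (by gcongr)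
  simpa [slope_def_field] using slope_le

theorem sqrt_one_add_sub_one_div_le_alphaStar {x y : ℝ} (hx : -1 < x) (hxy : x ≤ y)
    (hy : 0 < y) : (√(1 + y) - 1) / y ≤ alphaStar x y := by
  unfold alphaStar
  gcongr
  exact sqrt_le_div_sqrt (by linarith) (by gcongr)

theorem sqrt_one_add_le_one_add_alphaStar_mul {x y z : ℝ} (hx : -1 < x) (hxy : x ≤ y)
    (hy : 0 < y) (hyz : y ≤ z) : √(1 + z) ≤ 1 + alphaStar x y * z := by
  have hz : 0 < z := hy.trans_le hyz
  have slope_le_alphaStar : (√(1 + z) - 1) / z ≤ alphaStar x y :=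
    calc
      (√(1 + z) - 1) / z ≤ (√(1 + y) - 1) / y :=
        antitoneOn_sqrt_one_add_sub_one_div ⟨Set.mem_Ici.2 (by linarith), hy.ne'⟩
          ⟨Set.mem_Ici.2 (by linarith), hz.ne'⟩ hyz
      _ ≤ alphaStar x y := sqrt_one_add_sub_one_div_le_alphaStar hx hxy hy
  linarith [(div_le_iff₀ hz).1 slope_le_alphaStar]

/-- With `0 < g ≤ h ≤ H` and `η > 0`, at the coefficient
`α* = ((1+hη)/√(1+gη) − 1)/(hη)` the SIC user's rate is at least its OMA rate
`(1/2)log₂(1+Hη)`, hence it meets any minimum rate requirement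
`γn ≤ (1/2)log₂(1+Hη)`. -/
theorem SIC_rate_at_alpha_star
    (η g h H : ℝ) (hη : 0 < η) (hg : 0 < g) (hgh : g ≤ h) (hhH : h ≤ H)
    (αstar : ℝ)
    (hαstar : αstar = ((1 + h * η) / Real.sqrt (1 + g * η) - 1) / (h * η)) :
    Real.logb 2 (1 + αstar * H * η) ≥ (1 / 2) * Real.logb 2 (1 + H * η) ∧
    ∀ γn : ℝ, γn ≤ (1 / 2) * Real.logb 2 (1 + H * η) →
      Real.logb 2 (1 + αstar * H * η) ≥ γn := by
  have hh : 0 < h := hg.trans_le hgh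
  have hH : 0 < H := hh.trans_le hhH
  have sqrt_le : √(1 + H * η) ≤ 1 + αstar * H * η :=
    calc
      √(1 + H * η) ≤ 1 + alphaStar (g * η) (h * η) * (H * η) :=
        sqrt_one_add_le_one_add_alphaStar_mul (by linarith [mul_pos hg hη]) (by gcongr)
          (mul_pos hh hη) (by gcongr)
      _ = 1 + αstar * H * η := by rw [hαstar, alphaStar, mul_assoc _ H η]
  have oma_le : (1 / 2) * Real.logb 2 (1 + H * η) ≤ Real.logb 2 (1 + αstar * H * η) :=
    calc
      (1 / 2) * Real.logb 2 (1 + H * η) = Real.logb 2 √(1 + H * η) := by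
        rw [Real.sqrt_eq_rpow, Real.logb_rpow_eq_mul_logb_of_pos (by positivity)]
      _ ≤ Real.logb 2 (1 + αstar * H * η) :=
        Real.logb_le_logb_of_le one_lt_two (by positivity) sqrt_le
  exact ⟨oma_le, fun _ hγn ↦ hγn.trans oma_le⟩
end

section
/- Let η > 0 and 0 < g ≤ h ≤ H, let γ_n ≤ (1/2)log₂(1+Hη), and set α* = ((1+hη)/√(1+gη) − 1)/(hη). Then the aggregate pair rate at α* satisfies log₂(1+α*Hη) + log₂((1+hη)/(1+α*hη)) ≥ γ_n + (1/2)log₂(1+gη); that is, under the optimal power allocation both users' minimum OMA-based rate requirements are met simultaneously. -/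
/-!
At `α*` the rate of the non-SIC user is exactly `log₂ √(1 + gη)`, so only
`√(1 + Hη) ≤ 1 + α* Hη` is at stake. The coefficient `α*` decreases as the requirement grows,
hence is at least its value at `g = h`, which is `1 / (1 + √(1 + hη))`. Since `h ≤ H`, this is at
least `1 / (1 + √(1 + Hη)) = (√(1 + Hη) - 1) / (Hη)`.
-/

/-- The NOMA power allocation coefficient `α` of the SIC user for which the non-SIC user, of
signal-to-noise ratio `x`, has rate exactly `log₂ s`, i.e. the solution of
`(1 + x) / (1 + α * x) = s`. The coefficient `α*` is the case `x = hη`, `s = √(1 + gη)`. -/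
noncomputable def powerCoeff (x s : ℝ) : ℝ := ((1 + x) / s - 1) / x

section PowerCoeff

variable {x z s t : ℝ}

lemma one_add_powerCoeff_mul (hx : x ≠ 0) : 1 + powerCoeff x s * x = (1 + x) / s := by
  rw [powerCoeff, div_mul_cancel₀ _ hx, add_sub_cancel]

lemma one_add_div_one_add_powerCoeff_mul (hx : x ≠ 0) (hx₁ : 1 + x ≠ 0) :
    (1 + x) / (1 + powerCoeff x s * x) = s := by
  rw [one_add_powerCoeff_mul hx, div_div_cancel₀ hx₁]

lemma powerCoeff_le_powerCoeff (hx : 0 ≤ x) (hs : 0 < s) (hst : s ≤ t) :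
    powerCoeff x t ≤ powerCoeff x s := by
  unfold powerCoeff
  gcongr

lemma sqrt_one_add_eq_one_add_inv_mul (hz : -1 ≤ z) :
    √(1 + z) = 1 + (1 + √(1 + z))⁻¹ * z := by
  have hsq : √(1 + z) ^ 2 = 1 + z := Real.sq_sqrt (by linarith)
  field_simp
  linarith

lemma powerCoeff_sqrt_one_add (hx : -1 ≤ x) (hx₀ : x ≠ 0) :
    powerCoeff x √(1 + x) = (1 + √(1 + x))⁻¹ := by
  rw [powerCoeff, Real.div_sqrt, div_eq_iff hx₀, sub_eq_iff_eq_add']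
  exact sqrt_one_add_eq_one_add_inv_mul hx

lemma sqrt_one_add_le_one_add_powerCoeff_mul (hx : 0 < x) (hxz : x ≤ z) (hs : 0 < s)
    (hsx : s ≤ √(1 + x)) : √(1 + z) ≤ 1 + powerCoeff x s * z := by
  have hz : 0 < z := hx.trans_le hxz
  calc √(1 + z) = 1 + (1 + √(1 + z))⁻¹ * z := sqrt_one_add_eq_one_add_inv_mul (by linarith)
    _ ≤ 1 + (1 + √(1 + x))⁻¹ * z := by gcongr
    _ = 1 + powerCoeff x √(1 + x) * z := by rw [powerCoeff_sqrt_one_add (by linarith) hx.ne']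
    _ ≤ 1 + powerCoeff x s * z := by gcongr; exact powerCoeff_le_powerCoeff hx.le hs hsx

end PowerCoeff

lemma logb_sqrt {b y : ℝ} (hy : 0 ≤ y) :
    Real.logb b √y = (1 / 2) * Real.logb b y := by
  rw [Real.logb, Real.logb, Real.log_sqrt hy]
  ring

/-- With `η > 0`, `0 < g ≤ h ≤ H`, and SIC minimum rate requirement
`γn ≤ (1/2)log₂(1+Hη)`, the aggregate pair rate at
`α* = ((1+hη)/√(1+gη) − 1)/(hη)` is at least `γn + (1/2)log₂(1+gη)`;
both minimum OMA-based rate requirements are met simultaneously. -/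
theorem aggregate_rate_meets_requirements
    (η g h H γn : ℝ) (hη : 0 < η) (hg : 0 < g) (hgh : g ≤ h) (hhH : h ≤ H)
    (hγn : γn ≤ (1 / 2) * Real.logb 2 (1 + H * η))
    (αstar : ℝ)
    (hαstar : αstar = ((1 + h * η) / Real.sqrt (1 + g * η) - 1) / (h * η)) :
    Real.logb 2 (1 + αstar * H * η) +
        Real.logb 2 ((1 + h * η) / (1 + αstar * h * η)) ≥
      γn + (1 / 2) * Real.logb 2 (1 + g * η) := by
  have hh : 0 < h := hg.trans_le hgh
  have hH : 0 < H := hh.trans_le hhH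
  have hα : αstar = powerCoeff (h * η) √(1 + g * η) := hαstar
  have sic_rate : γn ≤ Real.logb 2 (1 + αstar * H * η) := by
    refine hγn.trans ?_
    rw [← logb_sqrt (by positivity), mul_assoc, hα]
    refine Real.logb_le_logb_of_le one_lt_two (by positivity) ?_
    exact sqrt_one_add_le_one_add_powerCoeff_mul (by positivity) (by gcongr) (by positivity)
      (by gcongr)
  have nonsic_rate : Real.logb 2 ((1 + h * η) / (1 + αstar * h * η)) =
      (1 / 2) * Real.logb 2 (1 + g * η) := by
    rw [mul_assoc, hα, one_add_div_one_add_powerCoeff_mul (by positivity) (by positivity),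
      logb_sqrt (by positivity)]
  rw [nonsic_rate]
  gcongr
end

section
/- Let η > 0 and 0 < h ≤ H, and set α* = (√(1+hη) − 1)/(hη). Then log₂(1+α*Hη) + log₂((1+hη)/(1+α*hη)) ≥ (1/2)log₂(1+Hη) + (1/2)log₂(1+hη); that is, when each user's minimum rate requirement is its OMA rate to the serving base station, NOMA with the optimal power allocation coefficient achieves an aggregate pair rate at least as large as the OMA aggregate rate of the two users. -/
/-!
Against received SNR `γ`, a user's OMA rate is `log₂ √(1 + γ)`. The SIC user's NOMA rate increases
with `α` and the non-SIC user's decreases, and both cross the OMA rate at the same coefficient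
`(√(1 + γ) - 1) / γ = 1 / (√(1 + γ) + 1)`. This threshold decreases in `γ`, so the coefficient that
gives the weaker (non-SIC) user exactly its OMA rate gives the stronger user at least its own.
-/

/-- Rate of the SIC user under NOMA with power coefficient `α`. Here and below, `γ` is the received
SNR of the user concerned, i.e. its channel gain times `η`. -/
noncomputable def sicRate (α γ : ℝ) : ℝ := Real.logb 2 (1 + α * γ)

/-- Rate of the non-SIC user under NOMA, when the SIC user has power coefficient `α`. -/
noncomputable def nonSICRate (α γ : ℝ) : ℝ := Real.logb 2 ((1 + γ) / (1 + α * γ))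

/-- Rate of a user under OMA, including the multiplexing loss `1 / 2`. -/
noncomputable def omaRate (γ : ℝ) : ℝ := (1 / 2) * Real.logb 2 (1 + γ)

/-- The power coefficient at which a user attains its OMA rate, in either NOMA role. It takes the
junk value `0` at `γ = 0`. -/
noncomputable def omaCoeff (γ : ℝ) : ℝ := (√(1 + γ) - 1) / γ

variable {α γ : ℝ}

theorem omaRate_eq_logb_sqrt (hγ : -1 ≤ γ) : omaRate γ = Real.logb 2 √(1 + γ) := by
  rw [omaRate, Real.logb, Real.logb, Real.log_sqrt (by linarith)]
  ring

theorem omaRate_le_sicRate_iff (hα : 0 ≤ α) (hγ : 0 < γ) :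
    omaRate γ ≤ sicRate α γ ↔ omaCoeff γ ≤ α := by
  rw [omaRate_eq_logb_sqrt (by linarith), sicRate,
    Real.logb_le_logb one_lt_two (by positivity) (by positivity), omaCoeff, div_le_iff₀ hγ,
    sub_le_iff_le_add']

theorem omaRate_le_nonSICRate_iff (hα : 0 ≤ α) (hγ : 0 < γ) :
    omaRate γ ≤ nonSICRate α γ ↔ α ≤ omaCoeff γ := by
  have hsqrt : 0 < √(1 + γ) := by positivity
  have hden : 0 < 1 + α * γ := by positivity
  calc omaRate γ ≤ nonSICRate α γ
      ↔ √(1 + γ) ≤ (1 + γ) / (1 + α * γ) := by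
        rw [omaRate_eq_logb_sqrt (by linarith), nonSICRate,
          Real.logb_le_logb one_lt_two hsqrt (by positivity)]
    _ ↔ 1 + α * γ ≤ (1 + γ) / √(1 + γ) := le_div_comm₀ hsqrt hden
    _ ↔ 1 + α * γ ≤ √(1 + γ) := by rw [Real.div_sqrt]
    _ ↔ α ≤ omaCoeff γ := by rw [omaCoeff, le_div_iff₀ hγ, le_sub_iff_add_le']

theorem omaCoeff_eq_one_div (hγ : -1 ≤ γ) (hγ₀ : γ ≠ 0) :
    omaCoeff γ = 1 / (√(1 + γ) + 1) := by
  have hsq : √(1 + γ) ^ 2 = 1 + γ := Real.sq_sqrt (by linarith)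
  have hden : √(1 + γ) + 1 ≠ 0 := by positivity
  rw [omaCoeff, div_eq_div_iff hγ₀ hden]
  linear_combination hsq

theorem omaCoeff_pos (hγ : 0 < γ) : 0 < omaCoeff γ := by
  rw [omaCoeff_eq_one_div (by linarith) hγ.ne']
  positivity

theorem antitoneOn_omaCoeff : AntitoneOn omaCoeff (Set.Ioi 0) := by
  intro γ (hγ : 0 < γ) δ (hδ : 0 < δ) hγδ
  rw [omaCoeff_eq_one_div (by linarith) hγ.ne', omaCoeff_eq_one_div (by linarith) hδ.ne']
  gcongr

/-- With `η > 0` and `0 < h ≤ H`, NOMA with the optimal coefficient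
`α* = (√(1+hη) − 1)/(hη)` achieves an aggregate pair rate at least as large as
the OMA aggregate rate `(1/2)log₂(1+Hη) + (1/2)log₂(1+hη)`. -/
theorem NOMA_beats_OMA
    (η h H : ℝ) (hη : 0 < η) (hh : 0 < h) (hhH : h ≤ H)
    (αstar : ℝ)
    (hαstar : αstar = (Real.sqrt (1 + h * η) - 1) / (h * η)) :
    Real.logb 2 (1 + αstar * H * η) +
        Real.logb 2 ((1 + h * η) / (1 + αstar * h * η)) ≥
      (1 / 2) * Real.logb 2 (1 + H * η) + (1 / 2) * Real.logb 2 (1 + h * η) := by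
  change αstar = omaCoeff (h * η) at hαstar
  have hweak : 0 < h * η := mul_pos hh hη
  have hle : h * η ≤ H * η := by gcongr
  have hstrong : 0 < H * η := hweak.trans_le hle
  have hα : 0 ≤ αstar := hαstar ▸ (omaCoeff_pos hweak).le
  have hsic : omaRate (H * η) ≤ sicRate αstar (H * η) :=
    (omaRate_le_sicRate_iff hα hstrong).2 (hαstar ▸ antitoneOn_omaCoeff hweak hstrong hle)
  have hnonSIC : omaRate (h * η) ≤ nonSICRate αstar (h * η) :=
    (omaRate_le_nonSICRate_iff hα hweak).2 hαstar.le
  rw [mul_assoc αstar H, mul_assoc αstar h]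
  exact add_le_add hsic hnonSIC
end
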